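/- arXiv:2506.08926 — 2 statements merged into one kernel-verified Lean document; each statement's English description precedes it below -/
import Mathlib

section
/- For every positive integer r there exists a positive integer k = k(r) such that the following holds: if G is a finite simple graph with a bipartition (X,Y) such that for every nonempty subset A ⊆ V(G) the number of distinct sets of the form N(v) ∩ A with v ∈ V(G) is at most r·|A|, then there is a coloring c : Y → {1,…,k} such that every vertex x ∈ X with at least one neighbor has some color appearing an odd number of times among its neighbors (all of which lie in Y). -/
/-- `G` has neighborhood complexity at most `r * m`. -/
def NbhdComplexityLinear {V : Type} [Fintype V] [DecidableEq V]
    (G : SimpleGraph V) [DecidableRel G.Adj] (r : ℕ) : Prop :=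
  ∀ A : Finset V, A.Nonempty →
    (Finset.univ.image (fun v => G.neighborFinset v ∩ A)).card ≤ r * A.card

/-!
Over `ZMod 2`, let `W` be the space of functions on the vertices, and regard each nonempty
neighborhood as its indicator in `W`. A `d`-dimensional subspace of `W` is separated by `d` of its
coordinates, so linear neighborhood complexity says that any such subspace contains at most `r * d`
of these vectors. By the Rado–Horn theorem they then split into `r` linearly independent classes,
and for each class `j` there is a functional `ψ j` equal to `1` on it. Color a vertex `u` by the
vector of values of the `ψ j` at the unit vector of `u`: if all colors occurred evenly often in a
neighborhood, every `ψ j` would vanish on its indicator.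
-/

open Finset Module

section Rado

variable {ι α : Type*} [DecidableEq α] {f : Finset α → ℕ} {A : ι → Finset α}

/-- The Hall–Rado condition on a family of finite sets, with a set function `f` in the role of the
rank: any `n` members of the family have a union of rank at least `n`. -/
def RadoCondition (f : Finset α → ℕ) (A : ι → Finset α) : Prop :=
  ∀ J : Finset ι, #J ≤ f (J.biUnion A)

namespace RadoCondition

theorem nonempty (h : RadoCondition f A) (h_empty : f ∅ = 0) (i : ι) : (A i).Nonempty := by
  rw [nonempty_iff_ne_empty]
  intro hi
  simpa [hi, h_empty] using h {i}

theorem exists_le_card_of_not_update [DecidableEq ι] {i : ι} {B : Finset α} (h : RadoCondition f A)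
    (hB : ¬ RadoCondition f (Function.update A i B)) :
    ∃ J : Finset ι, i ∉ J ∧ f (B ∪ J.biUnion A) ≤ #J := by
  have biUnion_update {J : Finset ι} (hi : i ∉ J) :
      J.biUnion (Function.update A i B) = J.biUnion A :=
    biUnion_congr rfl fun k hk ↦ Function.update_of_ne (ne_of_mem_of_not_mem hk hi) _ _
  simp only [RadoCondition, not_forall, not_le] at hB
  obtain ⟨J, hJ⟩ := hB
  by_cases hi : i ∈ J
  · refine ⟨J.erase i, notMem_erase i J, ?_⟩
    rw [← insert_erase hi, biUnion_insert, Function.update_self,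
      biUnion_update (notMem_erase i J), card_insert_of_notMem (notMem_erase i J)] at hJ
    exact Nat.lt_succ_iff.mp hJ
  · rw [biUnion_update hi] at hJ
    exact absurd (h J) hJ.not_ge

theorem update_erase_or_update_erase [DecidableEq ι] (h : RadoCondition f A) (hf : Monotone f)
    (hf_submod : ∀ s t, f (s ∪ t) + f (s ∩ t) ≤ f s + f t) (i : ι) {a b : α} (hab : a ≠ b) :
    RadoCondition f (Function.update A i ((A i).erase a)) ∨
      RadoCondition f (Function.update A i ((A i).erase b)) := by
  by_contra! hcon
  obtain ⟨J, hiJ, hJ⟩ := h.exists_le_card_of_not_update hcon.1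
  obtain ⟨K, hiK, hK⟩ := h.exists_le_card_of_not_update hcon.2
  set s := (A i).erase a ∪ J.biUnion A
  set t := (A i).erase b ∪ K.biUnion A
  -- Each element of `A i` survives in `s` or in `t`, because it differs from `a` or from `b`.
  have h_union : (insert i (J ∪ K)).biUnion A ⊆ s ∪ t := by grind
  have h_inter : (J ∩ K).biUnion A ⊆ s ∩ t := by grind
  have h_union_card : #(J ∪ K) + 1 ≤ f (s ∪ t) := by
    rw [← card_insert_of_notMem (by grind : i ∉ J ∪ K)]
    exact (h _).trans (hf h_union)
  have h_inter_card : #(J ∩ K) ≤ f (s ∩ t) := (h _).trans (hf h_inter)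
  have h_card := card_union_add_card_inter J K
  have h_submod := hf_submod s t
  omega

/-- **Rado's theorem** for submodular functions: a family that is minimal for the Hall–Rado
condition consists of singletons. -/
theorem exists_transversal [Finite ι] (h : RadoCondition f A) (hf : Monotone f)
    (hf_submod : ∀ s t, f (s ∪ t) + f (s ∩ t) ≤ f s + f t) (hf_empty : f ∅ = 0) :
    ∃ x : ι → α, (∀ i, x i ∈ A i) ∧ ∀ J : Finset ι, #J ≤ f (J.image x) := by
  classical
  obtain ⟨B, hBA, hB⟩ := exists_minimal_le_of_wellFoundedLT (RadoCondition f) A h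
  have erase_not (i : ι) {a : α} (ha : a ∈ B i) :
      ¬ RadoCondition f (Function.update B i ((B i).erase a)) :=
    hB.not_prop_of_lt (update_lt_self_iff.mpr (erase_ssubset ha))
  choose x hx using hB.prop.nonempty hf_empty
  have hBx : B = fun i ↦ {x i} := by
    funext i
    refine eq_singleton_iff_unique_mem.mpr ⟨hx i, fun a ha ↦ ?_⟩
    by_contra hax
    rcases hB.prop.update_erase_or_update_erase hf hf_submod i hax with h' | h'
    · exact erase_not i ha h'
    · exact erase_not i (hx i) h'
  refine ⟨x, fun i ↦ hBA i (hx i), fun J ↦ ?_⟩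
  simpa only [hBx, biUnion_singleton] using hB.prop J

end RadoCondition

end Rado

section LinearAlgebra

variable {K W ι κ : Type*} [DivisionRing K] [AddCommGroup W] [Module K W]

theorem finrank_union_add_finrank_inter_le [DecidableEq W] (s t : Finset W) :
    Set.finrank K (↑(s ∪ t) : Set W) + Set.finrank K (↑(s ∩ t) : Set W) ≤
      Set.finrank K (s : Set W) + Set.finrank K (t : Set W) := by
  have h_inter : Submodule.span K (↑(s ∩ t) : Set W) ≤
      Submodule.span K (s : Set W) ⊓ Submodule.span K (t : Set W) :=
    le_inf (Submodule.span_mono (by simp)) (Submodule.span_mono (by simp))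
  rw [Set.finrank, coe_union, Submodule.span_union]
  refine le_of_le_of_eq ?_ (Submodule.finrank_sup_add_finrank_inf_eq _ _)
  exact Nat.add_le_add_left (Submodule.finrank_mono h_inter) _

theorem exists_linearIndependent_transversal [Finite ι] [DecidableEq W] {A : ι → Finset W}
    (h : RadoCondition (fun s ↦ Set.finrank K (s : Set W)) A) :
    ∃ x : ι → W, (∀ i, x i ∈ A i) ∧ LinearIndependent K x := by
  have := Fintype.ofFinite ι
  obtain ⟨x, hxA, hx⟩ := h.exists_transversal
    (fun _ _ hst ↦ Submodule.finrank_mono (Submodule.span_mono (coe_subset.mpr hst)))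
    finrank_union_add_finrank_inter_le (by simp [Set.finrank])
  refine ⟨x, hxA, linearIndependent_iff_card_le_finrank_span.mpr ?_⟩
  simpa using hx univ

theorem finrank_iUnion_image_single [DecidableEq κ] [Fintype κ] (s : Set W) :
    Set.finrank K (⋃ j : κ, (Pi.single j '' s : Set (κ → W))) =
      Fintype.card κ * Set.finrank K s := by
  let U := Submodule.span K s
  have h_span : Submodule.span K (⋃ j : κ, (Pi.single j '' s : Set (κ → W))) =
      LinearMap.range (U.subtype.compLeft κ) := by
    rw [LinearMap.range_compLeft, Submodule.range_subtype, ← Submodule.iSup_map_single,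
      Submodule.span_iUnion]
    exact iSup_congr fun j ↦ Submodule.span_image (LinearMap.single K (fun _ ↦ W) j)
  have h_inj : Function.Injective (U.subtype.compLeft κ) := U.injective_subtype.comp_left
  rw [Set.finrank, h_span, LinearMap.finrank_range_of_inj h_inj]
  simp [finrank, U, Set.finrank]

/-- The **Rado–Horn theorem**: Rado's theorem is applied to the copies `Pi.single j (v i)` of the
vectors in `κ → W`, where a choice of copies is a partition. -/
theorem exists_partition_linearIndepOn [Finite ι] [Fintype κ] {v : ι → W}
    (h : ∀ J : Finset ι, #J ≤ Fintype.card κ * Set.finrank K (v '' J)) :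
    ∃ p : ι → κ, ∀ j, LinearIndepOn K v {i | p i = j} := by
  classical
  let copies (i : ι) : Finset (κ → W) := univ.image fun j ↦ Pi.single j (v i)
  have h_copies : RadoCondition (fun s ↦ Set.finrank K (s : Set (κ → W))) copies := by
    intro J
    have h_coe : (J.biUnion copies : Set (κ → W)) = ⋃ j : κ, Pi.single j '' (v '' J) := by
      ext
      simp only [copies, coe_biUnion, coe_image, coe_univ, mem_coe, Set.image_univ, Set.mem_iUnion,
        Set.mem_image, Set.mem_range]
      grind
    simpa only [h_coe, finrank_iUnion_image_single] using h J
  obtain ⟨x, hx, hx_indep⟩ := exists_linearIndependent_transversal h_copies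
  simp only [copies, mem_image, mem_univ, true_and] at hx
  choose p hp using hx
  refine ⟨p, fun j ↦ LinearIndependent.of_comp (LinearMap.single K (fun _ ↦ W) j) ?_⟩
  have h_single : (LinearMap.single K (fun _ ↦ W) j ∘ fun i : {i | p i = j} ↦ v i) =
      x ∘ Subtype.val := by
    funext ⟨i, hi⟩
    obtain rfl : p i = j := hi
    exact hp i
  rw [h_single]
  exact hx_indep.comp _ Subtype.val_injective

theorem exists_linearMap_forall_eq_one {v : ι → W} (hv : LinearIndependent K v) :
    ∃ φ : W →ₗ[K] K, ∀ i, φ (v i) = 1 := by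
  obtain ⟨φ, hφ⟩ := ((Basis.span hv).constr ℕ fun _ ↦ (1 : K)).exists_extend
  refine ⟨φ, fun i ↦ ?_⟩
  have h_one : φ (Basis.span hv i : W) = 1 :=
    (LinearMap.congr_fun hφ _).trans (Basis.constr_basis ..)
  rwa [Basis.span_apply] at h_one

end LinearAlgebra

theorem exists_finset_injOn_restrict {K V : Type*} [Field K] (U : Submodule K (V → K))
    [FiniteDimensional K U] :
    ∃ A : Finset V, #A ≤ finrank K U ∧ Set.InjOn (fun x : V → K ↦ A.restrict x) U := by
  classical
  let coord (u : V) : Dual K U := (LinearMap.proj u).domRestrict U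
  obtain ⟨κ, a, -, h_span, h_indep⟩ := exists_linearIndependent' K coord
  have := h_indep.finite
  have := Fintype.ofFinite κ
  refine ⟨univ.image a, ?_, fun x hx y hy hxy ↦ ?_⟩
  · have := h_indep.fintype_card_le_finrank
    rw [Subspace.dual_finrank_eq] at this
    exact card_image_le.trans this
  · have h_le : Submodule.span K (Set.range coord) ≤
        LinearMap.ker (Dual.eval K U (⟨x, hx⟩ - ⟨y, hy⟩)) := by
      rw [← h_span, Submodule.span_le]
      rintro _ ⟨k, rfl⟩
      have := congrFun hxy ⟨a k, by simp⟩
      simpa [coord, sub_eq_zero] using this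
    funext u
    have := h_le (Submodule.subset_span ⟨u, rfl⟩)
    simpa [coord, sub_eq_zero] using this

theorem exists_odd_card_filter_of_sum_ne_zero {V M : Type*} [AddCommGroup M] [Module (ZMod 2) M]
    [DecidableEq M] {s : Finset V} {c : V → M} (h : ∑ u ∈ s, c u ≠ 0) :
    ∃ m, Odd #{u ∈ s | c u = m} := by
  contrapose! h
  simp only [Nat.not_odd_iff_even] at h
  refine (sum_comp id c).trans (sum_eq_zero fun m _ ↦ ?_)
  rw [← Nat.cast_smul_eq_nsmul (ZMod 2), (ZMod.natCast_eq_zero_iff_even).mpr (h m), zero_smul]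

section OddColoring

variable {V : Type*} [DecidableEq V]

/-- The finite set system `𝓢` has linear trace complexity: it cuts out at most `r * #A` distinct
subsets of each nonempty finite set `A`. Applied to the neighborhoods of a graph, this is
`NbhdComplexityLinear`. -/
def TraceComplexityLinear (𝓢 : Finset (Finset V)) (r : ℕ) : Prop :=
  ∀ A : Finset V, A.Nonempty → #(𝓢.image (· ∩ A)) ≤ r * #A

/-- The indicator function of a finite set over the two-element field, written as a sum of unit
vectors so that linear maps can be evaluated on it termwise. -/
noncomputable def indicatorVec (s : Finset V) : V → ZMod 2 :=
  ∑ u ∈ s, Pi.single u 1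

theorem indicatorVec_apply (s : Finset V) (u : V) :
    indicatorVec s u = if u ∈ s then 1 else 0 := by
  simp [indicatorVec, Finset.sum_apply, Pi.single_apply]

theorem indicatorVec_injective : Function.Injective (indicatorVec : Finset V → V → ZMod 2) := by
  intro s t hst
  ext u
  have := congrFun hst u
  simp only [indicatorVec_apply] at this
  grind

theorem restrict_indicatorVec_eq_iff {s t A : Finset V} :
    A.restrict (indicatorVec s) = A.restrict (indicatorVec t) ↔ s ∩ A = t ∩ A := by
  simp only [funext_iff, restrict, indicatorVec_apply, Subtype.forall, Finset.ext_iff, mem_inter]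
  grind

theorem TraceComplexityLinear.card_le_mul_finrank {𝓢 𝓣 : Finset (Finset V)} {r : ℕ}
    (h : TraceComplexityLinear 𝓢 r) (h_sub : 𝓣 ⊆ 𝓢) (h_empty : ∅ ∉ 𝓣) :
    #𝓣 ≤ r * Set.finrank (ZMod 2) (indicatorVec '' (𝓣 : Set (Finset V))) := by
  rcases 𝓣.eq_empty_or_nonempty with rfl | ⟨s₀, hs₀⟩
  · simp
  let U := Submodule.span (ZMod 2) (indicatorVec '' (𝓣 : Set (Finset V)))
  have mem_U {s : Finset V} (hs : s ∈ 𝓣) : indicatorVec s ∈ U :=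
    Submodule.subset_span (Set.mem_image_of_mem _ hs)
  have : FiniteDimensional (ZMod 2) U :=
    FiniteDimensional.span_of_finite _ (𝓣.finite_toSet.image _)
  obtain ⟨A, hA, h_inj⟩ := exists_finset_injOn_restrict U
  have eq_of_inter_eq {s t : Finset V} (hs : indicatorVec s ∈ U) (ht : indicatorVec t ∈ U)
      (hst : s ∩ A = t ∩ A) : s = t :=
    indicatorVec_injective (h_inj hs ht (restrict_indicatorVec_eq_iff.mpr hst))
  have hA_nonempty : A.Nonempty := by
    rw [nonempty_iff_ne_empty]
    rintro rfl
    have h_zero : indicatorVec ∅ ∈ U := by simp [indicatorVec]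
    exact h_empty (eq_of_inter_eq (mem_U hs₀) h_zero (by simp) ▸ hs₀)
  have h_inter_inj : Set.InjOn (· ∩ A) (𝓣 : Set (Finset V)) :=
    fun s hs t ht ↦ eq_of_inter_eq (mem_U hs) (mem_U ht)
  calc #𝓣 = #(𝓣.image (· ∩ A)) := (card_image_of_injOn h_inter_inj).symm
    _ ≤ #(𝓢.image (· ∩ A)) := card_le_card (image_subset_image h_sub)
    _ ≤ r * #A := h A hA_nonempty
    _ ≤ r * finrank (ZMod 2) U := Nat.mul_le_mul_left r hA

theorem TraceComplexityLinear.exists_coloring_sum_ne_zero {𝓢 : Finset (Finset V)} {r : ℕ}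
    (h : TraceComplexityLinear 𝓢 r) :
    ∃ c : V → Fin r → ZMod 2, ∀ s ∈ 𝓢, s.Nonempty → ∑ u ∈ s, c u ≠ 0 := by
  let 𝓣 := {s ∈ 𝓢 | s.Nonempty}
  obtain ⟨p, hp⟩ : ∃ p : 𝓣 → Fin r,
      ∀ j, LinearIndepOn (ZMod 2) (fun s : 𝓣 ↦ indicatorVec s.1) {s | p s = j} := by
    refine exists_partition_linearIndepOn fun J ↦ ?_
    have h_sub : J.map (.subtype _) ⊆ 𝓢 := (map_subtype_subset J).trans (filter_subset _ _)
    have h_empty : ∅ ∉ J.map (.subtype _) := fun h_mem ↦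
      not_nonempty_empty (mem_filter.mp (map_subtype_subset J h_mem)).2
    simpa [Set.image_image] using h.card_le_mul_finrank h_sub h_empty
  choose ψ hψ using fun j ↦ exists_linearMap_forall_eq_one (hp j)
  refine ⟨fun u j ↦ ψ j (Pi.single u 1), fun s hs hs_nonempty h_sum ↦ ?_⟩
  let s' : 𝓣 := ⟨s, mem_filter.mpr ⟨hs, hs_nonempty⟩⟩
  have h_one : ψ (p s') (indicatorVec s) = 1 := hψ (p s') ⟨s', rfl⟩
  have h_zero : ψ (p s') (indicatorVec s) = 0 := by
    simpa [indicatorVec] using congrFun h_sum (p s')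
  exact one_ne_zero (h_one.symm.trans h_zero)

end OddColoring

theorem one_sided_odd_coloring_of_linear_neighborhood_complexity_general
    {V : Type} [Fintype V] [DecidableEq V] (G : SimpleGraph V) [DecidableRel G.Adj] {r : ℕ}
    (hG : NbhdComplexityLinear G r) :
    ∃ c : V → Fin (2 ^ r), ∀ x, (G.neighborFinset x).Nonempty →
      ∃ i, Odd #{u ∈ G.neighborFinset x | c u = i} := by
  have h_trace : TraceComplexityLinear (univ.image fun v ↦ G.neighborFinset v) r := fun A hA ↦ by
    simpa only [image_image, Function.comp_def] using hG A hA
  obtain ⟨c, hc⟩ := h_trace.exists_coloring_sum_ne_zero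
  let e : (Fin r → ZMod 2) ≃ Fin (2 ^ r) := Fintype.equivFinOfCardEq (by simp)
  refine ⟨e ∘ c, fun x hx ↦ ?_⟩
  obtain ⟨m, hm⟩ := exists_odd_card_filter_of_sum_ne_zero
    (hc _ (mem_image_of_mem _ (mem_univ x)) hx)
  exact ⟨e m, by simpa using hm⟩

/-- One-sided odd coloring for bipartite graphs of linear neighborhood complexity:
one can color `Y` with boundedly many colors so that every non-isolated vertex of `X`
sees some color an odd number of times. -/
theorem one_sided_odd_coloring_of_linear_neighborhood_complexity :
    ∀ r : ℕ, 0 < r → ∃ k : ℕ, 0 < k ∧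
      ∀ (V : Type) [Fintype V] [DecidableEq V] (G : SimpleGraph V) [DecidableRel G.Adj]
        (X Y : Finset V), Disjoint X Y → X ∪ Y = Finset.univ →
        (∀ u v : V, G.Adj u v → (u ∈ X ∧ v ∈ Y) ∨ (u ∈ Y ∧ v ∈ X)) →
        NbhdComplexityLinear G r →
        ∃ c : V → Fin k, ∀ x ∈ X, (G.neighborFinset x).Nonempty →
          ∃ i : Fin k, Odd ((G.neighborFinset x).filter (fun u => c u = i)).card := by
  intro r _
  refine ⟨2 ^ r, by positivity, fun V _ _ G _ X Y _ _ _ hG ↦ ?_⟩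
  obtain ⟨c, hc⟩ := one_sided_odd_coloring_of_linear_neighborhood_complexity_general G hG
  exact ⟨c, fun x _ ↦ hc x⟩
end

section
/- The class of circle graphs is χ_o-bounded: there exists a function f : ℕ → ℕ such that every finite circle graph G with clique number ω(G) satisfies χ_o(G) ≤ f(ω(G)). -/
/-- `G` is a circle graph: vertices correspond to chords `(a v, b v)` of a circle with
`2n` points, all endpoints distinct, and adjacency is chord crossing. -/
def IsCircleGraph {V : Type} (G : SimpleGraph V) : Prop :=
  ∃ (n : ℕ) (a b : V → ℕ),
    (∀ v, 1 ≤ a v ∧ a v < b v ∧ b v ≤ 2 * n) ∧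
    Function.Injective (Sum.elim a b : V ⊕ V → ℕ) ∧
    ∀ u v : V, G.Adj u v ↔
      ((a u < a v ∧ a v < b u ∧ b u < b v) ∨ (a v < a u ∧ a u < b v ∧ b v < b u))

/-- The clique number of `G`: the largest size of a clique. -/
noncomputable def cliqueNum {V : Type} (G : SimpleGraph V) : ℕ :=
  sSup {n | ∃ s : Finset V, G.IsNClique n s}

/-- `G` has an odd coloring with `k` colors. -/
def HasOddColoring {V : Type} (G : SimpleGraph V) (k : ℕ) : Prop :=
  ∃ c : V → Fin k, (∀ u v : V, G.Adj u v → c u ≠ c v) ∧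
    ∀ v : V, (G.neighborSet v).Nonempty →
      ∃ i : Fin k, Odd {u | u ∈ G.neighborSet v ∧ c u = i}.ncard

/-!
Represent chords by intervals of a line. If no two intervals cross and the points of the line carry
a noncrossing labelling, then joining the labels of the two ends of each interval gives a graph that
is sparse, hence degenerate, and so 13-colorable. This is used twice.

*Chromatic bound*, by induction on the clique number. In a connected crossing graph, split the
vertices by their distance to the interval with the leftmost left end. Each interval of a layer
contains an endpoint of the previous layer, a pin, and the intervals of the layer around a given pin
are all adjacent to one interval of the previous layer, so they contain no maximum clique. Cut every
interval at its last pin: the cut intervals have a smaller clique number and are colored by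
induction. Separating in addition the gaps between pins that hold the two ends of a cut interval, a
clique within one color class has a common pin, and induction applies once more.

*Parity*. The intervals of one color class `J` do not cross, so they cut the half-plane into
regions. Let `h` be a function on the regions with values in characteristic 2, and let the jump at
`u ∈ J` be the difference of the values of `h` on the two sides of `u`. The neighbors of `v` in `J`
are the arcs separating the ends of `v`, so their jumps telescope to the difference of `h` at the
two ends of `v`. Recording in the color of `u` labels of its two sides that separate the end
regions of each color class of intervals makes some such sum nonzero, hence some color class of
odd size in the neighborhood of `v`.
-/

open Finset

section Colorings

variable {V : Type*} {G : SimpleGraph V}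

theorem exists_proper_on_finset_of_degenerate [DecidableRel G.Adj] {d : ℕ}
    (h : ∀ s : Finset V, s.Nonempty → ∃ v ∈ s, #{w ∈ s | G.Adj v w} ≤ d) (s : Finset V) :
    ∃ c : V → Fin (d + 1), ∀ u ∈ s, ∀ w ∈ s, G.Adj u w → c u ≠ c w := by
  classical
  induction s using Finset.strongInduction with
  | H s ih =>
    obtain rfl | hs := s.eq_empty_or_nonempty
    · exact ⟨fun _ ↦ 0, by simp⟩
    obtain ⟨v, hv, hdeg⟩ := h s hs
    obtain ⟨c, hc⟩ := ih (s.erase v) (erase_ssubset hv)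
    have hfree : #(({w ∈ s | G.Adj v w}).image c) < #(univ : Finset (Fin (d + 1))) := by
      rw [card_univ, Fintype.card_fin]
      exact Nat.lt_succ_of_le (card_image_le.trans hdeg)
    obtain ⟨z, -, hz⟩ := exists_mem_notMem_of_card_lt_card hfree
    have hvz : ∀ w ∈ s, G.Adj v w → z ≠ c w := fun w hw hvw hzw ↦
      hz (mem_image.2 ⟨w, mem_filter.2 ⟨hw, hvw⟩, hzw.symm⟩)
    refine ⟨Function.update c v z, fun u hu w hw huw ↦ ?_⟩
    obtain rfl | huv := eq_or_ne u v
    · rw [Function.update_self, Function.update_of_ne huw.ne']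
      exact hvz w hw huw
    obtain rfl | hwv := eq_or_ne w v
    · rw [Function.update_self, Function.update_of_ne huv]
      exact (hvz u hu huw.symm).symm
    · rw [Function.update_of_ne huv, Function.update_of_ne hwv]
      exact hc u (mem_erase.2 ⟨huv, hu⟩) w (mem_erase.2 ⟨hwv, hw⟩) huw

theorem colorable_of_degenerate [DecidableRel G.Adj] {d : ℕ}
    (h : ∀ s : Finset V, s.Nonempty → ∃ v ∈ s, #{w ∈ s | G.Adj v w} ≤ d) :
    G.Colorable (d + 1) := by
  -- de Bruijn–Erdős: it suffices to color the finite subgraphs.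
  refine SimpleGraph.nonempty_hom_of_forall_finite_subgraph_hom fun G' hG' ↦ ?_
  choose c hc using exists_proper_on_finset_of_degenerate h hG'.toFinset
  exact ⟨fun v ↦ c v, fun {u w} huw ↦ hc u (hG'.mem_toFinset.2 u.2) w (hG'.mem_toFinset.2 w.2)
    (G'.adj_sub huw)⟩

theorem colorable_card_mul_of_induce_fibers {κ μ : Type*} [Fintype μ] {n : ℕ} (f : V → κ)
    (g : V → μ) (hfg : ∀ ⦃u v⦄, G.Adj u v → g u = g v → f u = f v)
    (h : ∀ i, (G.induce {v | f v = i}).Colorable n) : G.Colorable (Fintype.card μ * n) := by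
  let c (i : κ) : (G.induce {v | f v = i}).Coloring (Fin n) := (h i).some
  have transport : ∀ u i (hu : f u = i), c (f u) ⟨u, rfl⟩ = c i ⟨u, hu⟩ := by
    rintro u _ rfl
    rfl
  let C : G.Coloring (μ × Fin n) := .mk (fun v ↦ (g v, c (f v) ⟨v, rfl⟩)) fun {u v} huv heq ↦ by
    obtain ⟨hg, hc⟩ := Prod.mk.inj heq
    rw [transport u (f v) (hfg huv hg)] at hc
    exact (c (f v)).valid (v := ⟨u, hfg huv hg⟩) (w := ⟨v, rfl⟩) huv hc
  simpa using C.colorable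

end Colorings

section Crossing

variable {ι α κ L : Type*}

/-- The overlap graph of the intervals `(l i, r i)`: two of them are adjacent when they meet and
neither contains the other. Inequalities are strict, so intervals sharing an endpoint do not
cross. -/
def crossingGraph [Preorder α] (l r : ι → α) : SimpleGraph ι where
  Adj i j := (l i < l j ∧ l j < r i ∧ r i < r j) ∨ (l j < l i ∧ l i < r j ∧ r j < r i)
  symm := ⟨fun _ _ ↦ Or.symm⟩
  loopless := ⟨fun _ h ↦ h.elim (fun h ↦ lt_irrefl _ h.1) (fun h ↦ lt_irrefl _ h.1)⟩

/-- The classes of the labelling `f` of the points of a line form a noncrossing partition. -/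
def IsNoncrossing [Preorder α] (f : α → L) : Prop :=
  ∀ ⦃p q p' q'⦄, p < q → q < p' → p' < q' → f p = f p' → f q = f q' → f p = f q

/-- The graph on `L` with an edge joining the ends `x i` and `y i` of each arc `i`; arcs whose ends
coincide are discarded. -/
def arcGraph (x y : ι → L) : SimpleGraph L :=
  .fromRel fun a b ↦ ∃ i, x i = a ∧ y i = b

theorem isNoncrossing_of_monotone [Preorder α] [PartialOrder L] {f : α → L} (hf : Monotone f) :
    IsNoncrossing f :=
  fun _ _ _ _ hpq hqp' _ hp _ ↦ (hf hpq.le).antisymm (hp ▸ hf hqp'.le)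

variable [LinearOrder α]

theorem card_le_card_image_fst_add_card_image_snd (E : Finset (α × α)) (hlt : ∀ e ∈ E, e.1 < e.2)
    (hE : (crossingGraph (Prod.fst : α × α → α) Prod.snd).IsIndepSet E) :
    #E ≤ #(E.image Prod.fst) + #(E.image Prod.snd) := by
  let A : Finset (α × α) := {e ∈ E | ∀ e' ∈ E, e'.1 = e.1 → e'.2 ≤ e.2}
  let B : Finset (α × α) := {e ∈ E | ∀ e' ∈ E, e'.2 = e.2 → e.1 ≤ e'.1}
  have hcover : E ⊆ A ∪ B := by
    intro e he
    by_contra hAB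
    simp only [A, B, mem_union, mem_filter, not_or, he, true_and] at hAB
    push Not at hAB
    obtain ⟨⟨e₁, he₁, hfst, hlong₁⟩, e₂, he₂, hsnd, hlong₂⟩ := hAB
    have hne : e₂ ≠ e₁ := fun h ↦ (h ▸ hlong₂).ne hfst
    exact hE he₂ he₁ hne (.inl ⟨hfst ▸ hlong₂, hfst ▸ hsnd ▸ hlt e he, hsnd ▸ hlong₁⟩)
  have hA : #A ≤ #(E.image Prod.fst) := by
    refine card_le_card_of_injOn Prod.fst
      (fun e he ↦ mem_image_of_mem _ (mem_filter.1 he).1) fun e he e' he' h ↦ Prod.ext h ?_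
    have he := mem_filter.1 he
    have he' := mem_filter.1 he'
    exact (he'.2 e he.1 h).antisymm (he.2 e' he'.1 h.symm)
  have hB : #B ≤ #(E.image Prod.snd) := by
    refine card_le_card_of_injOn Prod.snd
      (fun e he ↦ mem_image_of_mem _ (mem_filter.1 he).1) fun e he e' he' h ↦ Prod.ext ?_ h
    have he := mem_filter.1 he
    have he' := mem_filter.1 he'
    exact (he.2 e' he'.1 h.symm).antisymm (he'.2 e he.1 h)
  calc #E ≤ #(A ∪ B) := card_le_card hcover
    _ ≤ #A + #B := card_union_le A B
    _ ≤ _ := Nat.add_le_add hA hB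

theorem IsNoncrossing.exists_monotone_separating {f : α → L} (hf : IsNoncrossing f)
    (s : Finset L) : ∃ β : α → ℕ, Monotone β ∧ (∀ p, β p ≤ 2 * #s) ∧
      ∀ p q, f p ∈ s → f q ∈ s → β p = β q → f p = f q := by
  classical
  -- `β p` counts the labels of `s` that have started by `p` and those that have ended before `p`.
  let started (p : α) : Finset L := {x ∈ s | ∃ p' ≤ p, f p' = x}
  let ended (p : α) : Finset L := {x ∈ s | ∀ p', f p' = x → p' < p}
  have started_mono : Monotone started := fun p q hpq ↦
    monotone_filter_right s fun x _ ⟨p', hp', hx⟩ ↦ ⟨p', hp'.trans hpq, hx⟩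
  have ended_mono : Monotone ended := fun p q hpq ↦
    monotone_filter_right s fun x _ hx p' hp' ↦ (hx p' hp').trans_le hpq
  have separates_of_lt : ∀ p q, p < q → f p ∈ s → f q ∈ s →
      #(started p) + #(ended p) = #(started q) + #(ended q) → f p = f q := by
    intro p q hpq hp hq hcard
    have hstarted := card_le_card (started_mono hpq.le)
    have hended := card_le_card (ended_mono hpq.le)
    have started_eq := eq_of_subset_of_card_le (started_mono hpq.le) (by omega)
    have ended_eq := eq_of_subset_of_card_le (ended_mono hpq.le) (by omega)
    have hq_started : f q ∈ started p := started_eq ▸ mem_filter.2 ⟨hq, q, le_rfl, rfl⟩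
    have hp_ended : f p ∉ ended q := ended_eq ▸ fun h ↦ lt_irrefl p ((mem_filter.1 h).2 p rfl)
    obtain ⟨-, p₀, hp₀, hfp₀⟩ := mem_filter.1 hq_started
    obtain ⟨q₀, hfq₀, hq₀⟩ : ∃ q₀, f q₀ = f p ∧ q ≤ q₀ := by
      simpa only [ended, mem_filter, hp, true_and, not_forall, not_lt, exists_prop] using hp_ended
    obtain rfl | hp₀ := hp₀.eq_or_lt
    · exact hfp₀
    obtain rfl | hq₀ := hq₀.eq_or_lt
    · exact hfq₀.symm
    exact (hf hp₀ hpq hq₀ hfp₀ hfq₀.symm).symm.trans hfp₀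
  refine ⟨fun p ↦ #(started p) + #(ended p),
    fun p q hpq ↦ Nat.add_le_add (card_le_card (started_mono hpq)) (card_le_card (ended_mono hpq)),
    fun p ↦ ?_, fun p q hp hq hpq ↦ ?_⟩
  · rw [two_mul]
    exact Nat.add_le_add (card_filter_le _ _) (card_filter_le _ _)
  · obtain h | rfl | h := lt_trichotomy p q
    · exact separates_of_lt p q h hp hq hpq
    · rfl
    · exact (separates_of_lt q p h hq hp hpq.symm).symm

variable {l r : ι → α}

theorem card_monotone_image_arcs_le {β : Type*} [LinearOrder β] {φ : α → β} (hφ : Monotone φ)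
    (hnc : crossingGraph l r = ⊥) {P : Finset β} (hP : ∀ p, φ p ∈ P) {E : Finset (β × β)}
    (hlt : ∀ e ∈ E, e.1 < e.2) (hE : ∀ e ∈ E, ∃ i, φ (l i) = e.1 ∧ φ (r i) = e.2) :
    #E ≤ 2 * #P := by
  have not_cross : ∀ e ∈ E, ∀ e' ∈ E, ¬ (e.1 < e'.1 ∧ e'.1 < e.2 ∧ e.2 < e'.2) := by
    intro e he e' he' h
    obtain ⟨i, hl, hr⟩ := hE e he
    obtain ⟨i', hl', hr'⟩ := hE e' he'
    rw [← hl, ← hr, ← hl', ← hr'] at h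
    have hadj : (crossingGraph l r).Adj i i' :=
      .inl ⟨hφ.reflect_lt h.1, hφ.reflect_lt h.2.1, hφ.reflect_lt h.2.2⟩
    rwa [hnc] at hadj
  have hfst : E.image Prod.fst ⊆ P := image_subset_iff.2 fun e he ↦ by
    obtain ⟨i, hl, -⟩ := hE e he
    exact hl ▸ hP (l i)
  have hsnd : E.image Prod.snd ⊆ P := image_subset_iff.2 fun e he ↦ by
    obtain ⟨i, -, hr⟩ := hE e he
    exact hr ▸ hP (r i)
  calc #E ≤ #(E.image Prod.fst) + #(E.image Prod.snd) :=
        card_le_card_image_fst_add_card_image_snd E hlt fun e he e' he' _ h ↦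
          h.elim (not_cross e he e' he') (not_cross e' he' e he)
    _ ≤ #P + #P := Nat.add_le_add (card_le_card hfst) (card_le_card hsnd)
    _ = 2 * #P := (two_mul _).symm

open Classical in
theorem IsNoncrossing.card_arcs_le {f : α → L} (hf : IsNoncrossing f) (hlr : ∀ i, l i < r i)
    (hnc : crossingGraph l r = ⊥) (s : Finset L) :
    #{d ∈ s ×ˢ s | d.1 ≠ d.2 ∧ ∃ i, f (l i) = d.1 ∧ f (r i) = d.2} ≤ 4 * #s + 2 := by
  obtain ⟨φ, φ_mono, φ_le, φ_sep⟩ := hf.exists_monotone_separating s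
  have φ_mem : ∀ p, φ p ∈ range (2 * #s + 1) := fun p ↦ mem_range.2 (Nat.lt_succ_of_le (φ_le p))
  let arcs : Finset (ℕ × ℕ) := {e ∈ range (2 * #s + 1) ×ˢ range (2 * #s + 1) |
    e.1 < e.2 ∧ ∃ i, φ (l i) = e.1 ∧ φ (r i) = e.2}
  let represents (d : L × L) (e : ℕ × ℕ) : Prop :=
    ∃ i, (f (l i), f (r i)) = d ∧ (φ (l i), φ (r i)) = e
  have hcard : #{d ∈ s ×ˢ s | d.1 ≠ d.2 ∧ ∃ i, f (l i) = d.1 ∧ f (r i) = d.2} ≤ #arcs := by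
    refine card_le_card_of_forall_subsingleton represents (fun d hd ↦ ?_) ?_
    · obtain ⟨hds, hne, i, hl, hr⟩ := mem_filter.1 hd
      obtain ⟨h₁, h₂⟩ := mem_product.1 hds
      have hφ : φ (l i) ≠ φ (r i) := fun h ↦
        hne (hl ▸ hr ▸ φ_sep _ _ (hl ▸ h₁) (hr ▸ h₂) h)
      exact ⟨(φ (l i), φ (r i)), mem_filter.2 ⟨mem_product.2 ⟨φ_mem _, φ_mem _⟩,
        (φ_mono (hlr i).le).lt_of_ne hφ, i, rfl, rfl⟩, i, Prod.ext hl hr, rfl⟩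
    · rintro _ - d ⟨hd, i, rfl, rfl⟩ d' ⟨hd', i', rfl, hi'⟩
      obtain ⟨hl, hr⟩ := Prod.mk.inj hi'
      obtain ⟨hds, -⟩ := mem_filter.1 hd
      obtain ⟨hds', -⟩ := mem_filter.1 hd'
      obtain ⟨h₁, h₂⟩ := mem_product.1 hds
      obtain ⟨h₁', h₂'⟩ := mem_product.1 hds'
      exact Prod.ext (φ_sep _ _ h₁ h₁' hl.symm) (φ_sep _ _ h₂ h₂' hr.symm)
  have harcs : #arcs ≤ 2 * #(range (2 * #s + 1)) :=
    card_monotone_image_arcs_le φ_mono hnc φ_mem (fun e he ↦ (mem_filter.1 he).2.1)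
      (fun e he ↦ (mem_filter.1 he).2.2)
  rw [card_range] at harcs
  omega

theorem arcGraph_colorable {f : α → L} (hf : IsNoncrossing f) (hlr : ∀ i, l i < r i)
    (hnc : crossingGraph l r = ⊥) : (arcGraph (f ∘ l) (f ∘ r)).Colorable 13 := by
  classical
  refine colorable_of_degenerate fun s hs ↦ ?_
  let D : Finset (L × L) := {d ∈ s ×ˢ s | d.1 ≠ d.2 ∧ ∃ i, f (l i) = d.1 ∧ f (r i) = d.2}
  have hD : #D ≤ 4 * #s + 2 := hf.card_arcs_le hlr hnc s
  have hadj : {d ∈ s ×ˢ s | (arcGraph (f ∘ l) (f ∘ r)).Adj d.1 d.2} ⊆ D ∪ D.image Prod.swap := by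
    rintro ⟨x, y⟩ hxy
    obtain ⟨hs, hne, hxy | hyx⟩ := mem_filter.1 hxy
    · exact mem_union_left _ (mem_filter.2 ⟨hs, hne, hxy⟩)
    · refine mem_union_right _ (mem_image.2 ⟨(y, x), mem_filter.2 ⟨?_, hne.symm, hyx⟩, rfl⟩)
      exact mem_product.2 (mem_product.1 hs).symm
  have hdeg : ∑ x ∈ s, #{y ∈ s | (arcGraph (f ∘ l) (f ∘ r)).Adj x y} < ∑ _x ∈ s, 13 := by
    calc ∑ x ∈ s, #{y ∈ s | (arcGraph (f ∘ l) (f ∘ r)).Adj x y}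
        = #{d ∈ s ×ˢ s | (arcGraph (f ∘ l) (f ∘ r)).Adj d.1 d.2} := by
          simp only [card_filter, sum_product]
      _ ≤ #D + #(D.image Prod.swap) := (card_le_card hadj).trans (card_union_le _ _)
      _ ≤ (4 * #s + 2) + (4 * #s + 2) := Nat.add_le_add hD (card_image_le.trans hD)
      _ < ∑ _x ∈ s, 13 := by
          rw [sum_const, smul_eq_mul]
          have := hs.card_pos
          omega
  obtain ⟨v, hv, hlt⟩ := exists_lt_of_sum_lt hdeg
  exact ⟨v, hv, Nat.le_of_lt_succ hlt⟩

theorem IsNoncrossing.exists_separating_coloring {f : α → L} (hf : IsNoncrossing f)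
    (hlr : ∀ i, l i < r i) (C : (crossingGraph l r).Coloring κ) :
    ∃ q : κ → L → Fin 13, ∀ i, f (l i) ≠ f (r i) → q (C i) (f (l i)) ≠ q (C i) (f (r i)) := by
  have hclass : ∀ k, crossingGraph (fun i : C.colorClass k ↦ l i) (fun i ↦ r i) = ⊥ := fun k ↦ by
    ext i j
    exact iff_of_false (C.not_adj_of_mem_colorClass i.2 j.2) (by simp)
  let q (k : κ) : (arcGraph _ _).Coloring (Fin 13) :=
    (arcGraph_colorable hf (fun i : C.colorClass k ↦ hlr i) (hclass k)).some
  exact ⟨fun k ↦ q k, fun i hi ↦ (q (C i)).valid ⟨hi, .inl ⟨⟨i, rfl⟩, rfl, rfl⟩⟩⟩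

end Crossing

section ChromaticBound

universe u v

variable {ι : Type u} {α : Type v} [LinearOrder α] {l r : ι → α} {k N : ℕ}

/-- Finite crossing graphs of clique number at most `k` are `N`-colorable, for intervals in `α` with
distinct left ends. Right ends may coincide, so that an interval can be cut off at a point shared
with other intervals. -/
def CrossingGraphsColorable (α : Type v) [LinearOrder α] (k N : ℕ) : Prop :=
  ∀ (ι : Type u) [Finite ι] (l r : ι → α), Function.Injective l →
    (crossingGraph l r).CliqueFree (k + 1) → (crossingGraph l r).Colorable N

theorem left_lt_right_of_isClique (hlr : ∀ v, l v < r v) {s : Set ι}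
    (hs : (crossingGraph l r).IsClique s) {v z : ι} (hv : v ∈ s) (hz : z ∈ s) : l v < r z := by
  obtain rfl | hvz := eq_or_ne v z
  · exact hlr v
  · obtain ⟨hlt, -, -⟩ | ⟨-, hlt, -⟩ := hs hv hz hvz
    · exact hlt.trans (hlr z)
    · exact hlt

section Pins

variable {P : Set α} {t : ι → α}

theorem exists_last_pin (hP : P.Finite) (hpin : ∀ v, ∃ p ∈ P, l v < p ∧ p < r v) :
    ∃ t : ι → α, ∀ v, IsGreatest (P ∩ Set.Ioo (l v) (r v)) (t v) := by
  choose p hp using hpin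
  choose t ht using fun v ↦ Set.exists_max_image (P ∩ Set.Ioo (l v) (r v)) id
    (hP.inter_of_left _) ⟨p v, hp v⟩
  exact ⟨t, ht⟩

theorem crossingGraph_last_pin_le (ht : ∀ v, IsGreatest (P ∩ Set.Ioo (l v) (r v)) (t v)) :
    crossingGraph l t ≤ crossingGraph l r := by
  have cross : ∀ u v, l u < l v → l v < t u → t u < t v → l v < r u ∧ r u < r v :=
    fun u v hl hvu hlt ↦ ⟨hvu.trans (ht u).1.2.2, lt_of_not_ge fun hle ↦ hlt.not_ge <|
      (ht u).2 ⟨(ht v).1.1, hl.trans (ht v).1.2.1, (ht v).1.2.2.trans_le hle⟩⟩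
  rintro u v (⟨hl, hvu, hlt⟩ | ⟨hl, hvu, hlt⟩)
  · exact .inl ⟨hl, cross u v hl hvu hlt⟩
  · exact .inr ⟨hl, cross v u hl hvu hlt⟩

theorem not_isNClique_of_left_lt_last_pin
    (ht : ∀ v, IsGreatest (P ∩ Set.Ioo (l v) (r v)) (t v))
    (hP : ∀ p ∈ P, (crossingGraph l r).CliqueFreeOn {v | l v < p ∧ p < r v} (k + 1))
    {s : Finset ι} (hs : ∀ v ∈ s, ∀ z ∈ s, l v < t z) :
    ¬ (crossingGraph l r).IsNClique (k + 1) s := by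
  intro hclique
  have hne : s.Nonempty := card_pos.1 (hclique.card_eq ▸ k.succ_pos)
  obtain ⟨z, hz, hmin⟩ := s.exists_min_image t hne
  exact hP (t z) (ht z).1.1
    (fun v hv ↦ ⟨hs v hv z hz, (hmin v hv).trans_lt (ht v).1.2.2⟩) hclique

theorem pins_below_ne (ht : ∀ v, IsGreatest (P ∩ Set.Ioo (l v) (r v)) (t v)) (v : ι) :
    P ∩ Set.Iic (l v) ≠ P ∩ Set.Iic (t v) := fun h ↦
  (ht v).1.2.1.not_ge (h.ge ⟨(ht v).1.1, le_rfl⟩).2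

theorem pins_below_eq_of_last_pin_le {v : ι} {p : α}
    (ht : ∀ v, IsGreatest (P ∩ Set.Ioo (l v) (r v)) (t v)) (htp : t v ≤ p) (hpr : p < r v) :
    P ∩ Set.Iic p = P ∩ Set.Iic (t v) := by
  refine Set.Subset.antisymm ?_ (Set.inter_subset_inter_right P (Set.Iic_subset_Iic.2 htp))
  rintro p' ⟨hp', hle⟩
  refine ⟨hp', le_of_not_gt fun hlt ↦ hlt.not_ge ?_⟩
  exact (ht v).2 ⟨hp', (ht v).1.2.1.trans hlt, hle.trans_lt hpr⟩

theorem colorable_of_pins [Finite ι] (hl : Function.Injective l)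
    (hN : CrossingGraphsColorable.{u} α k N) (hPfin : P.Finite)
    (hpin : ∀ v, ∃ p ∈ P, l v < p ∧ p < r v)
    (hP : ∀ p ∈ P, (crossingGraph l r).CliqueFreeOn {v | l v < p ∧ p < r v} (k + 1)) :
    (crossingGraph l r).Colorable (N * 13 * N) := by
  obtain ⟨t, ht⟩ := exists_last_pin hPfin hpin
  have hlt : ∀ v, l v < t v := fun v ↦ (ht v).1.2.1
  have hlr : ∀ v, l v < r v := fun v ↦ (hlt v).trans (ht v).1.2.2
  have cut_cliqueFree : (crossingGraph l t).CliqueFree (k + 1) := fun s hs ↦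
    not_isNClique_of_left_lt_last_pin ht hP
      (fun v hv z hz ↦ left_lt_right_of_isClique hlt hs.isClique hv hz)
      (hs.mono (crossingGraph_last_pin_le ht))
  let ψ : (crossingGraph l t).Coloring (Fin N) := (hN ι l t hl cut_cliqueFree).some
  let gap (p : α) : Set α := P ∩ Set.Iic p
  have gap_noncrossing : IsNoncrossing gap := isNoncrossing_of_monotone fun p q hpq ↦
    Set.inter_subset_inter_right P (Set.Iic_subset_Iic.2 hpq)
  obtain ⟨q, hq⟩ := gap_noncrossing.exists_separating_coloring hlt ψ
  let c (v : ι) : Fin N × Fin 13 := (ψ v, q (ψ v) (gap (l v)))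
  -- Otherwise `l v` and `t z` lie in the same gap, which `q` separates from the gap of `l z`.
  have left_lt_last_pin : ∀ v z, c v = c z → l v < r z → l v < t z := by
    intro v z hc hvz
    by_contra! hle
    obtain ⟨hψ, hqv⟩ := Prod.mk.inj hc
    refine hq z (pins_below_ne ht z) ?_
    rw [← hqv, hψ, show gap (l v) = gap (t z) from pins_below_eq_of_last_pin_le ht hle hvz]
  have fiber_colorable : ∀ i, ((crossingGraph l r).induce {v | c v = i}).Colorable N := by
    refine fun i ↦ hN _ _ _ (hl.comp Subtype.val_injective) ?_
    refine (SimpleGraph.cliqueFree_induce_iff (crossingGraph l r) {v | c v = i} _).2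
      fun s hs hclique ↦ ?_
    exact not_isNClique_of_left_lt_last_pin ht hP
      (fun v hv z hz ↦ left_lt_last_pin v z ((hs hv).trans (hs hz).symm)
        (left_lt_right_of_isClique hlr hclique.isClique hv hz)) hclique
  simpa using colorable_card_mul_of_induce_fibers c c (fun _ _ _ h ↦ h) fiber_colorable

end Pins

section Layers

theorem exists_adj_dist_eq {V : Type*} {G : SimpleGraph V} {x v : V} {n : ℕ}
    (h : G.dist x v = n + 1) : ∃ u, G.Adj v u ∧ G.dist x u = n := by
  obtain ⟨p, hp⟩ := SimpleGraph.exists_walk_of_dist_ne_zero (h.trans_ne n.succ_ne_zero)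
  have hnil : ¬ p.Nil := by
    rw [← SimpleGraph.Walk.length_eq_zero_iff]
    omega
  have hadj : G.Adj p.penultimate v := p.adj_penultimate hnil
  have hle : G.dist x p.penultimate ≤ n := by
    refine (SimpleGraph.dist_le p.dropLast).trans ?_
    rw [SimpleGraph.Walk.length_dropLast, hp, h, Nat.add_sub_cancel]
  have hdiff := hadj.diff_dist_adj (u := x)
  exact ⟨p.penultimate, hadj.symm, by omega⟩

variable {x : ι}

theorem not_nested_of_dist_lt (hl : Function.Injective l) (hx : ∀ v, l x ≤ l v)
    (hconn : (crossingGraph l r).Connected) {y z : ι}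
    (hdist : (crossingGraph l r).dist x y < (crossingGraph l r).dist x z) :
    ¬ (l z < l y ∧ r y ≤ r z) := by
  induction hn : (crossingGraph l r).dist x y generalizing y with
  | zero =>
    rw [← hconn.dist_eq_zero_iff.1 hn]
    exact fun h ↦ h.1.not_ge (hx z)
  | succ n ih =>
    obtain ⟨u, hyu, hu⟩ := exists_adj_dist_eq hn
    have not_nested : ¬ (l z < l u ∧ r u ≤ r z) := ih (by omega) hu
    have huz : l u ≠ l z := hl.ne fun h ↦ by subst h; omega
    have not_adj : ¬ (crossingGraph l r).Adj u z := fun h ↦ by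
      have := h.diff_dist_adj (u := x)
      omega
    rintro ⟨hzy, hyz⟩
    obtain ⟨hlt, hmid, -⟩ | ⟨-, hmid, hgt⟩ := hyu
    · have hzu : l z < l u := hzy.trans hlt
      refine not_adj (.inr ⟨hzu, hmid.trans_le hyz, lt_of_not_ge fun h ↦ not_nested ⟨hzu, h⟩⟩)
    · have hur : r u < r z := hgt.trans_le hyz
      exact not_adj (.inl ⟨(le_of_not_gt fun h ↦ not_nested ⟨h, hur.le⟩).lt_of_ne huz,
        hzy.trans hmid, hur⟩)

theorem adj_of_endpoint_mem (hl : Function.Injective l) {y z : ι} (hyz : y ≠ z)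
    (hnested : ¬ (l z < l y ∧ r y ≤ r z)) {p : α} (hp : p = l y ∨ p = r y) (hzp : l z < p)
    (hpz : p < r z) : (crossingGraph l r).Adj y z := by
  obtain rfl | rfl := hp
  · exact .inr ⟨hzp, hpz, lt_of_not_ge fun h ↦ hnested ⟨hzp, h⟩⟩
  · exact .inl ⟨(le_of_not_gt fun h ↦ hnested ⟨h, hpz.le⟩).lt_of_ne (hl.ne hyz), hzp, hpz⟩

theorem exists_endpoint_mem_of_adj {u v : ι} (h : (crossingGraph l r).Adj v u) :
    ∃ p, (p = l u ∨ p = r u) ∧ l v < p ∧ p < r v := by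
  obtain ⟨hlt, hmid, -⟩ | ⟨-, hmid, hgt⟩ := h
  · exact ⟨l u, .inl rfl, hlt, hmid⟩
  · exact ⟨r u, .inr rfl, hmid, hgt⟩

theorem colorable_layer_succ [Finite ι] (hl : Function.Injective l) (hx : ∀ v, l x ≤ l v)
    (hconn : (crossingGraph l r).Connected) (hN : CrossingGraphsColorable.{u} α k N)
    (hclique : (crossingGraph l r).CliqueFree (k + 2)) (j : ℕ) :
    ((crossingGraph l r).induce {v | (crossingGraph l r).dist x v = j + 1}).Colorable
      (N * 13 * N) := by
  let S : Set ι := {v | (crossingGraph l r).dist x v = j + 1}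
  let Y : Set ι := {y | (crossingGraph l r).dist x y = j}
  have hpin : ∀ v : S, ∃ p ∈ l '' Y ∪ r '' Y, l v < p ∧ p < r v := fun v ↦ by
    obtain ⟨y, hvy, hy⟩ := exists_adj_dist_eq v.2
    obtain ⟨p, rfl | rfl, hp⟩ := exists_endpoint_mem_of_adj hvy
    · exact ⟨_, .inl ⟨y, hy, rfl⟩, hp⟩
    · exact ⟨_, .inr ⟨y, hy, rfl⟩, hp⟩
  refine colorable_of_pins (l := fun v : S ↦ l v) (r := fun v ↦ r v)
    (hl.comp Subtype.val_injective) hN ((Y.toFinite.image l).union (Y.toFinite.image r)) hpin ?_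
  intro p hp s hs hs_clique
  obtain ⟨y, hy, hpy⟩ : ∃ y ∈ Y, p = l y ∨ p = r y := by
    obtain ⟨y, hy, rfl⟩ | ⟨y, hy, rfl⟩ := hp
    · exact ⟨y, hy, .inl rfl⟩
    · exact ⟨y, hy, .inr rfl⟩
  have y_adj : ∀ v ∈ s, (crossingGraph l r).Adj y v := fun v hv ↦ by
    have hdist : (crossingGraph l r).dist x y < (crossingGraph l r).dist x v := by
      rw [show _ = _ from hy, show _ = _ from v.2]
      exact j.lt_succ_self
    exact adj_of_endpoint_mem hl (ne_of_apply_ne _ hdist.ne)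
      (not_nested_of_dist_lt hl hx hconn hdist) hpy (hs hv).1 (hs hv).2
  classical
  have hs_clique : (crossingGraph l r).IsNClique (k + 1) (s.map (.subtype _)) :=
    (SimpleGraph.isNClique_induce_iff S s _).1 hs_clique
  exact hclique _ (hs_clique.insert (a := y) (by simpa using y_adj))

theorem colorable_of_connected [Finite ι] (hl : Function.Injective l)
    (hconn : (crossingGraph l r).Connected) (hN : CrossingGraphsColorable.{u} α k N) (hNpos : 0 < N)
    (hclique : (crossingGraph l r).CliqueFree (k + 2)) :
    (crossingGraph l r).Colorable (2 * (N * 13 * N)) := by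
  have := hconn.nonempty
  obtain ⟨x, hx⟩ := Finite.exists_min l
  have layer_colorable : ∀ j, ((crossingGraph l r).induce
      {v | (crossingGraph l r).dist x v = j}).Colorable (N * 13 * N) := by
    rintro (_ | j)
    · have : Subsingleton {v | (crossingGraph l r).dist x v = 0} := ⟨fun u v ↦ Subtype.ext <|
        (hconn.dist_eq_zero_iff.1 u.2).symm.trans (hconn.dist_eq_zero_iff.1 v.2)⟩
      have hpos : 0 < N * 13 * N := by positivity
      exact ⟨.mk (fun _ ↦ ⟨0, hpos⟩) fun h ↦ (h.ne (Subsingleton.elim _ _)).elim⟩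
    · exact colorable_layer_succ hl hx hconn hN hclique j
  refine colorable_card_mul_of_induce_fibers (μ := ZMod 2) ((crossingGraph l r).dist x)
    (fun v ↦ (crossingGraph l r).dist x v) (fun u v huv hpar ↦ ?_) layer_colorable
  have hdist := huv.diff_dist_adj (u := x)
  have hmod := (ZMod.natCast_eq_natCast_iff' _ _ 2).1 hpar
  omega

end Layers

theorem CrossingGraphsColorable.succ (hN : CrossingGraphsColorable.{u} α k N) (hNpos : 0 < N) :
    CrossingGraphsColorable.{u} α (k + 1) (2 * (N * 13 * N)) := by
  intro ι _ l r hl hclique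
  refine SimpleGraph.colorable_iff_forall_connectedComponent.2 fun c ↦ ?_
  exact colorable_of_connected (l := fun v : c ↦ l v) (r := fun v : c ↦ r v)
    (hl.comp Subtype.val_injective) c.connected_toSimpleGraph hN hNpos
    ((SimpleGraph.cliqueFree_induce_iff _ c.supp _).2 hclique.cliqueFreeOn)

theorem crossingGraphsColorable (α : Type v) [LinearOrder α] (k : ℕ) :
    CrossingGraphsColorable.{u} α k (26 ^ (2 ^ k - 1)) := by
  induction k with
  | zero =>
    intro ι _ l r _ hclique
    have : IsEmpty ι := SimpleGraph.cliqueFree_one.1 hclique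
    exact .of_isEmpty _
  | succ k ih =>
    convert ih.succ (by positivity) using 1
    obtain ⟨m, hm⟩ : ∃ m, 2 ^ k = m + 1 := Nat.exists_eq_succ_of_ne_zero (by positivity)
    rw [pow_succ, hm, Nat.add_sub_cancel, show (m + 1) * 2 - 1 = m + m + 1 by omega]
    ring

end ChromaticBound

section CharTwo

variable {ι R : Type*} [Ring R] [CharP R 2]

theorem sum_symmDiff_of_charTwo [DecidableEq ι] (s t : Finset ι) (g : ι → R) :
    ∑ u ∈ symmDiff s t, g u = ∑ u ∈ s, g u - ∑ u ∈ t, g u := by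
  rw [symmDiff_def, sup_eq_union, sum_union disjoint_sdiff_sdiff, ← CharTwo.sub_eq_add,
    sum_sdiff_sub_sum_sdiff]

theorem exists_odd_card_filter_of_sum_ne_zero_s13 {κ : Type*} [DecidableEq κ]
    {s : Finset ι} {D : ι → κ} {g : κ → R} (h : ∑ u ∈ s, g (D u) ≠ 0) :
    ∃ i, Odd #{u ∈ s | D u = i} := by
  contrapose! h
  rw [sum_comp g D]
  exact sum_eq_zero fun i _ ↦ by
    rw [nsmul_eq_mul,
      (CharP.cast_eq_zero_iff R 2 _).2 (Nat.not_odd_iff_even.1 (h i)).two_dvd, zero_mul]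

theorem exists_odd_card_fiber_of_odd_card_filter {κ : Type*} [DecidableEq κ] {s : Finset ι}
    {D : ι → κ} {p : κ → Prop} [DecidablePred p] (h : Odd #{u ∈ s | p (D u)}) :
    ∃ i, Odd #{u ∈ s | D u = i} := by
  refine exists_odd_card_filter_of_sum_ne_zero_s13 (R := ZMod 2) (g := fun i ↦ if p i then 1 else 0) ?_
  rw [sum_boole]
  exact ZMod.natCast_ne_zero_iff_odd.2 h

end CharTwo

section Regions

variable {ι α : Type*} [LinearOrder α] {l r : ι → α} {J : Finset ι}

/-- The region of the half-plane above the point `t` that remains after cutting along the arcs of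
`J`, encoded by the set of arcs of `J` covering `t`. -/
def region (l r : ι → α) (J : Finset ι) (t : α) : Finset ι :=
  {u ∈ J | l u < t ∧ t < r u}

theorem isNoncrossing_region : IsNoncrossing (region l r J) := by
  intro p q p' q' hpq hqp' hpq' hp hq
  ext u
  have hpu : u ∈ region l r J p ↔ u ∈ region l r J p' := by rw [hp]
  have hqu : u ∈ region l r J q ↔ u ∈ region l r J q' := by rw [hq]
  simp only [region, mem_filter] at hpu hqu ⊢
  grind

theorem region_left_ne_region_right {u v : ι} (hu : u ∈ J)
    (hvu : (crossingGraph l r).Adj v u) : region l r J (l v) ≠ region l r J (r v) := fun h ↦ by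
  have hmem : u ∈ region l r J (l v) ↔ u ∈ region l r J (r v) := by rw [h]
  simp only [region, mem_filter, hu, true_and] at hmem
  obtain ⟨hlt, hmid, hgt⟩ | ⟨hlt, hmid, hgt⟩ := hvu
  · exact hlt.not_gt (hmem.2 ⟨hmid, hgt⟩).1
  · exact hgt.not_gt (hmem.1 ⟨hlt, hmid⟩).2

variable [DecidableEq ι]

theorem region_eq_insert (hl : Function.Injective l) (hJ : (crossingGraph l r).IsIndepSet J)
    {t : α} {u : ι} (hu : u ∈ region l r J t) (hmax : ∀ w ∈ region l r J t, l w ≤ l u) :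
    region l r J t = insert u (region l r J (l u)) := by
  have huJ := mem_filter.1 hu
  ext w
  obtain rfl | hwu := eq_or_ne w u
  · exact iff_of_true hu (mem_insert_self w _)
  simp only [mem_insert, hwu, false_or]
  refine ⟨fun hw ↦ ?_, fun hw ↦ ?_⟩
  · obtain ⟨hwJ, -, htw⟩ := mem_filter.1 hw
    exact mem_filter.2 ⟨hwJ, (hmax w hw).lt_of_ne (hl.ne hwu), huJ.2.1.trans htw⟩
  · obtain ⟨hwJ, hlt, hmid⟩ := mem_filter.1 hw
    refine mem_filter.2 ⟨hwJ, hlt.trans huJ.2.1, huJ.2.2.trans_le (le_of_not_gt fun hlt' ↦ ?_)⟩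
    exact hJ hwJ huJ.1 hwu (.inl ⟨hlt, hmid, hlt'⟩)

theorem sum_jump_region {M : Type*} [AddCommGroup M] (hl : Function.Injective l)
    (hJ : (crossingGraph l r).IsIndepSet J) (h : Finset ι → M) (t : α) :
    ∑ u ∈ region l r J t, (h (insert u (region l r J (l u))) - h (region l r J (l u))) =
      h (region l r J t) - h ∅ := by
  induction hn : #(region l r J t) generalizing t with
  | zero => rw [card_eq_zero.1 hn, sum_empty, sub_self]
  | succ n ih =>
    have hne : (region l r J t).Nonempty := card_pos.1 (by omega)
    obtain ⟨u, hu, hmax⟩ := exists_max_image _ l hne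
    have hinsert := region_eq_insert hl hJ hu hmax
    have hnot : u ∉ region l r J (l u) := fun h ↦ (mem_filter.1 h).2.1.false
    have hcard : #(region l r J (l u)) = n := by
      rw [hinsert, card_insert_of_notMem hnot] at hn
      exact Nat.succ_injective hn
    rw [hinsert, sum_insert hnot, ih (l u) hcard, sub_add_sub_cancel]

open scoped Classical in
theorem filter_adj_eq_symmDiff_region (hlr : ∀ u, l u < r u)
    (hends : Function.Injective (Sum.elim l r)) {v : ι} (hv : v ∉ J) :
    {u ∈ J | (crossingGraph l r).Adj v u} =
      symmDiff (region l r J (l v)) (region l r J (r v)) := by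
  ext u
  by_cases hu : u ∈ J
  · have huv : u ≠ v := fun h ↦ hv (h ▸ hu)
    have hll : l u ≠ l v := hends.ne (Sum.inl_injective.ne huv)
    have hrr : r u ≠ r v := hends.ne (Sum.inr_injective.ne huv)
    simp only [region, mem_symmDiff, mem_filter, hu, true_and]
    grind [crossingGraph, hlr u, hlr v]
  · simp [region, mem_symmDiff, hu]

open scoped Classical in
theorem sum_jump_adj {R : Type*} [Ring R] [CharP R 2] (hlr : ∀ u, l u < r u)
    (hends : Function.Injective (Sum.elim l r)) (hJ : (crossingGraph l r).IsIndepSet J) {v : ι}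
    (hv : v ∉ J) (h : Finset ι → R) :
    ∑ u ∈ J with (crossingGraph l r).Adj v u,
      (h (insert u (region l r J (l u))) - h (region l r J (l u))) =
        h (region l r J (l v)) - h (region l r J (r v)) := by
  have hl : Function.Injective l := hends.comp Sum.inl_injective
  rw [filter_adj_eq_symmDiff_region hlr hends hv, sum_symmDiff_of_charTwo,
    sum_jump_region hl hJ, sum_jump_region hl hJ, sub_sub_sub_cancel_right]

open scoped Classical in
theorem exists_odd_card_adj_jump {β : Type*} [DecidableEq β] (hlr : ∀ u, l u < r u)
    (hends : Function.Injective (Sum.elim l r)) (hJ : (crossingGraph l r).IsIndepSet J) {v : ι}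
    (hv : v ∉ J) {q : Finset ι → β} (hq : q (region l r J (l v)) ≠ q (region l r J (r v))) :
    ∃ e, Odd #{u ∈ {u ∈ J | (crossingGraph l r).Adj v u} |
      (q (region l r J (l u)), q (insert u (region l r J (l u)))) = e} := by
  let χ : β → ZMod 2 := Pi.single (q (region l r J (l v))) 1
  refine exists_odd_card_filter_of_sum_ne_zero_s13 (g := fun e ↦ χ e.2 - χ e.1) ?_
  rw [sum_jump_adj hlr hends hJ hv fun S ↦ χ (q S)]
  simp [χ, hq.symm]

end Regions

section OddColoring

theorem exists_odd_coloring_crossingGraph {ι α κ : Type*} [Finite ι] [LinearOrder α] {l r : ι → α}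
    (hlr : ∀ u, l u < r u) (hends : Function.Injective (Sum.elim l r))
    (C : (crossingGraph l r).Coloring κ) :
    ∃ D : (crossingGraph l r).Coloring (κ × (κ → Fin 13 × Fin 13)),
      ∀ v, ((crossingGraph l r).neighborSet v).Nonempty →
        ∃ i, Odd {u | u ∈ (crossingGraph l r).neighborSet v ∧ D u = i}.ncard := by
  classical
  have := Fintype.ofFinite ι
  let J (j : κ) : Finset ι := {u | C u = j}
  choose q hq using fun j ↦ (isNoncrossing_region (J := J j)).exists_separating_coloring hlr C
  -- `q j i` separates the end regions of the intervals of color `i` among the regions of `J j`, so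
  -- the color of `u` has to record the labels of its two sides for every `i`.
  let outer (u : ι) : Finset ι := region l r (J (C u)) (l u)
  let D (u : ι) : κ × (κ → Fin 13 × Fin 13) :=
    (C u, fun i ↦ (q (C u) i (outer u), q (C u) i (insert u (outer u))))
  refine ⟨.mk D fun h heq ↦ C.valid h (congrArg Prod.fst heq), fun v ⟨u₀, hu₀⟩ ↦ ?_⟩
  have hvJ : v ∉ J (C u₀) := fun hv ↦ C.valid hu₀ (mem_filter.1 hv).2
  have hu₀J : u₀ ∈ J (C u₀) := mem_filter.2 ⟨mem_univ u₀, rfl⟩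
  have hJ : (crossingGraph l r).IsIndepSet (J (C u₀)) := fun u hu w hw _ h ↦
    C.valid h ((mem_filter.1 hu).2.trans (mem_filter.1 hw).2.symm)
  obtain ⟨e, he⟩ := exists_odd_card_adj_jump hlr hends hJ hvJ
    (hq (C u₀) v (region_left_ne_region_right hu₀J hu₀))
  have hclass : Odd #{u ∈ {u | (crossingGraph l r).Adj v u} |
      (D u).1 = C u₀ ∧ (D u).2 (C v) = e} := by
    convert he using 2
    rw [filter_filter, filter_filter, filter_filter]
    refine filter_congr fun u _ ↦ ?_
    rw [and_left_comm]
    refine and_congr_right fun hu : C u = C u₀ ↦ ?_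
    simp only [D, outer, hu]
  obtain ⟨c, hc⟩ := exists_odd_card_fiber_of_odd_card_filter (D := D)
    (p := fun c ↦ c.1 = C u₀ ∧ c.2 (C v) = e) hclass
  refine ⟨c, ?_⟩
  rw [filter_filter, ← Set.ncard_coe_finset] at hc
  simpa only [coe_filter_univ] using! hc

theorem hasOddColoring_of_coloring {V κ : Type} [Fintype κ] {G : SimpleGraph V}
    (D : G.Coloring κ) (hD : ∀ v, (G.neighborSet v).Nonempty →
      ∃ i, Odd {u | u ∈ G.neighborSet v ∧ D u = i}.ncard) : HasOddColoring G (Fintype.card κ) := by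
  let e := Fintype.equivFin κ
  refine ⟨e ∘ D, fun u v h ↦ e.injective.ne (D.valid h), fun v hv ↦ ?_⟩
  obtain ⟨i, hi⟩ := hD v hv
  exact ⟨e i, by simpa only [Function.comp_apply, e.apply_eq_iff_eq] using hi⟩

theorem IsCircleGraph.exists_eq_crossingGraph {V : Type} {G : SimpleGraph V}
    (hG : IsCircleGraph G) : ∃ l r : V → ℕ, (∀ v, l v < r v) ∧
      Function.Injective (Sum.elim l r) ∧ G = crossingGraph l r := by
  obtain ⟨_, l, r, hlr, hends, hadj⟩ := hG
  exact ⟨l, r, fun v ↦ (hlr v).2.1, hends, SimpleGraph.ext (funext₂ fun u v ↦ propext (hadj u v))⟩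

theorem cliqueFree_cliqueNum_succ {V : Type} [Finite V] (G : SimpleGraph V) :
    G.CliqueFree (cliqueNum G + 1) := fun _ hs ↦
  (Nat.lt_succ_self _).not_ge (hs.card_eq ▸ hs.isClique.card_le_cliqueNum)

end OddColoring

/-- The class of circle graphs is `χ_o`-bounded. -/
theorem circle_graphs_odd_chi_bounded :
    ∃ f : ℕ → ℕ, ∀ (V : Type) [Fintype V] (G : SimpleGraph V),
      IsCircleGraph G → HasOddColoring G (f (cliqueNum G)) := by
  let N (k : ℕ) : ℕ := 26 ^ (2 ^ k - 1)
  refine ⟨fun k ↦ Fintype.card (Fin (N k) × (Fin (N k) → Fin 13 × Fin 13)), fun V _ G hG ↦ ?_⟩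
  have hclique := cliqueFree_cliqueNum_succ G
  generalize cliqueNum G = k at hclique ⊢
  obtain ⟨l, r, hlr, hends, rfl⟩ := hG.exists_eq_crossingGraph
  have hl : Function.Injective l := hends.comp Sum.inl_injective
  obtain ⟨C⟩ : (crossingGraph l r).Colorable (N k) := crossingGraphsColorable ℕ k V l r hl hclique
  obtain ⟨D, hD⟩ := exists_odd_coloring_crossingGraph hlr hends C
  exact hasOddColoring_of_coloring D hD
end
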